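/- For every H ∈ (0,1), f(H) > 1/(5√H); consequently f(H) → ∞ as H → 0⁺. -/

import Mathlib

open MeasureTheory ProbabilityTheory Real Set Filter Topology

noncomputable section

/-- `X` is a centered Gaussian process on the time set `S`: every finite linear
combination `∑ i, c i * X (ts i)` of its values at times in `S` is a centered
Gaussian random variable. -/
def IsCenteredGaussianOn {Ω : Type} [MeasurableSpace Ω] (μ : Measure Ω)
    (X : ℝ → Ω → ℝ) (S : Set ℝ) : Prop :=
  (∀ t ∈ S, Measurable (X t)) ∧
  ∀ (k : ℕ) (c : Fin k → ℝ) (ts : Fin k → ℝ), (∀ i, ts i ∈ S) →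
    ∃ v : NNReal, μ.map (fun ω => ∑ i, c i * X (ts i) ω) = gaussianReal 0 v

/-- The `L²`-norm `‖Y‖₂ = (E Y²)^{1/2}` of a real random variable. -/
def l2norm {Ω : Type} [MeasurableSpace Ω] (μ : Measure Ω) (Y : Ω → ℝ) : ℝ :=
  Real.sqrt (∫ ω, (Y ω) ^ 2 ∂μ)

/-- The expected supremum `E [sup_{0 ≤ t ≤ 1} X_t]`. -/
def expMax {Ω : Type} [MeasurableSpace Ω] (μ : Measure Ω) (X : ℝ → Ω → ℝ) : ℝ :=
  ∫ ω, (⨆ t : Icc (0:ℝ) 1, X t.1 ω) ∂μ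

/-- The expected maximum over the grid: `E [max_{0 ≤ i ≤ n} X_{i/n}]`. -/
def expMaxGrid {Ω : Type} [MeasurableSpace Ω] (μ : Measure Ω) (X : ℝ → Ω → ℝ) (n : ℕ) : ℝ :=
  ∫ ω, (⨆ i : Fin (n + 1), X (((i : ℕ) : ℝ) / (n : ℝ)) ω) ∂μ

/-- `B` is a fractional Brownian motion with Hurst parameter `H`: a centered Gaussian
process on `[0,∞)` with a.s. continuous sample paths, `B 0 = 0`, and covariance
`E[B_s B_t] = (s^{2H} + t^{2H} - |t-s|^{2H}) / 2`. -/
def IsFBM {Ω : Type} [MeasurableSpace Ω] (μ : Measure Ω) (H : ℝ) (B : ℝ → Ω → ℝ) : Prop :=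
  IsCenteredGaussianOn μ B (Ici 0) ∧
  (∀ᵐ ω ∂μ, ContinuousOn (fun t => B t ω) (Ici 0)) ∧
  (∀ᵐ ω ∂μ, B 0 ω = 0) ∧
  ∀ s t : ℝ, 0 ≤ s → 0 ≤ t →
    ∫ ω, B s ω * B t ω ∂μ = (s ^ (2 * H) + t ^ (2 * H) - |t - s| ^ (2 * H)) / 2

section FiniteMaximum

variable {Ω ι : Type*} [MeasurableSpace Ω] {μ : Measure Ω} [Fintype ι] [Nonempty ι]

theorem abs_iSup_le_sum_abs (x : ι → ℝ) : |⨆ i, x i| ≤ ∑ i, |x i| := by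
  have hle : ∀ i, |x i| ≤ ∑ j, |x j| := fun i =>
    Finset.single_le_sum (f := fun j => |x j|) (fun j _ => abs_nonneg _) (Finset.mem_univ i)
  rw [abs_le]
  constructor
  · obtain ⟨i⟩ := ‹Nonempty ι›
    exact (neg_le_neg (hle i)).trans
      ((neg_abs_le (x i)).trans (le_ciSup (Finite.bddAbove_range x) i))
  · exact ciSup_le fun i => (le_abs_self _).trans (hle i)

theorem integrable_iSup_of_finite {f : ι → Ω → ℝ} (hf : ∀ i, Integrable (f i) μ) :
    Integrable (fun ω => ⨆ i, f i ω) μ := by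
  refine (integrable_finsetSum Finset.univ fun i _ => (hf i).abs).mono'
    (AEMeasurable.iSup fun i => (hf i).aemeasurable).aestronglyMeasurable
    (ae_of_all _ fun ω => ?_)
  exact abs_iSup_le_sum_abs fun i => f i ω

theorem iSup_add_const_of_finite (x : ι → ℝ) (c : ℝ) : ⨆ i, (x i + c) = (⨆ i, x i) + c :=
  ((OrderIso.addRight c).map_ciSup (Finite.bddAbove_range x)).symm

end FiniteMaximum

section GaussianVariable

variable {Ω : Type*} [MeasurableSpace Ω] {μ : Measure Ω} {Y : Ω → ℝ} {v : NNReal}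

theorem memLp_of_map_eq_gaussianReal (hY : Measurable Y) (h : μ.map Y = gaussianReal 0 v)
    (p : NNReal) : MemLp Y p μ := by
  have := memLp_id_gaussianReal (μ := 0) (v := v) p
  rw [← h] at this
  exact (memLp_map_measure_iff aestronglyMeasurable_id hY.aemeasurable).1 this

theorem integrable_of_map_eq_gaussianReal (hY : Measurable Y) (h : μ.map Y = gaussianReal 0 v) :
    Integrable Y μ :=
  memLp_one_iff_integrable.1 (by simpa using memLp_of_map_eq_gaussianReal hY h 1)

theorem integral_of_map_eq_gaussianReal (hY : Measurable Y) (h : μ.map Y = gaussianReal 0 v) :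
    ∫ ω, Y ω ∂μ = 0 := by
  have := integral_map (μ := μ) hY.aemeasurable (f := fun x : ℝ => x) aestronglyMeasurable_id
  rw [← this, h, integral_id_gaussianReal]

theorem integral_sq_of_map_eq_gaussianReal (hY : Measurable Y)
    (h : μ.map Y = gaussianReal 0 v) : ∫ ω, Y ω ^ 2 ∂μ = v := by
  have := integral_map (μ := μ) hY.aemeasurable (f := fun x : ℝ => x ^ 2)
    (by fun_prop)
  rw [← this, h, ← variance_id_gaussianReal (μ := 0) (v := v), variance_eq_integral (by fun_prop)]
  simp [integral_id_gaussianReal]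

theorem integral_cexp_of_map_eq_gaussianReal (hY : Measurable Y)
    (h : μ.map Y = gaussianReal 0 v) :
    ∫ ω, Complex.exp (Y ω * Complex.I) ∂μ = Complex.exp (-((∫ ω, Y ω ^ 2 ∂μ : ℝ) : ℂ) / 2) := by
  have := integral_map (μ := μ) hY.aemeasurable (f := fun x : ℝ => Complex.exp (x * Complex.I))
    (by fun_prop)
  rw [← this, h, integral_sq_of_map_eq_gaussianReal hY h]
  have h1 := charFun_gaussianReal (μ := 0) (v := v) 1
  rw [charFun_apply_real] at h1
  simp only [Complex.ofReal_one, one_mul] at h1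
  rw [h1]
  congr 1
  simp
  ring

end GaussianVariable

/-- Every linear combination of the family `X` is a centered Gaussian random variable. -/
def IsCenteredGaussianVector {Ω ι : Type*} [MeasurableSpace Ω] [Fintype ι] (μ : Measure Ω)
    (X : ι → Ω → ℝ) : Prop :=
  (∀ i, Measurable (X i)) ∧
  ∀ c : ι → ℝ, ∃ v : NNReal, μ.map (fun ω => ∑ i, c i * X i ω) = gaussianReal 0 v

namespace IsCenteredGaussianVector

variable {Ω ι : Type*} [MeasurableSpace Ω] [Fintype ι] {μ : Measure Ω} {X : ι → Ω → ℝ}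

theorem measurable_sum (hX : IsCenteredGaussianVector μ X) (c : ι → ℝ) :
    Measurable fun ω => ∑ i, c i * X i ω :=
  Finset.measurable_sum _ fun i _ => (hX.1 i).const_mul (c i)

theorem exists_map_eq (hX : IsCenteredGaussianVector μ X) (i : ι) :
    ∃ v : NNReal, μ.map (X i) = gaussianReal 0 v := by
  classical
  obtain ⟨v, hv⟩ := hX.2 (Pi.single i 1)
  refine ⟨v, ?_⟩
  rw [← hv]
  congr 1
  ext ω
  simp [Pi.single_apply]

theorem integrable (hX : IsCenteredGaussianVector μ X) (i : ι) : Integrable (X i) μ :=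
  let ⟨_, hv⟩ := hX.exists_map_eq i
  integrable_of_map_eq_gaussianReal (hX.1 i) hv

theorem memLp_two (hX : IsCenteredGaussianVector μ X) (i : ι) : MemLp (X i) 2 μ :=
  let ⟨_, hv⟩ := hX.exists_map_eq i
  by simpa using memLp_of_map_eq_gaussianReal (hX.1 i) hv 2

theorem integral_eq_zero (hX : IsCenteredGaussianVector μ X) (i : ι) : ∫ ω, X i ω ∂μ = 0 :=
  let ⟨_, hv⟩ := hX.exists_map_eq i
  integral_of_map_eq_gaussianReal (hX.1 i) hv

theorem integral_sq_sum (hX : IsCenteredGaussianVector μ X) (c : ι → ℝ) :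
    ∫ ω, (∑ i, c i * X i ω) ^ 2 ∂μ = ∑ i, ∑ j, c i * c j * ∫ ω, X i ω * X j ω ∂μ := by
  have hint : ∀ i j, Integrable (fun ω => c i * c j * (X i ω * X j ω)) μ := fun i j =>
    ((hX.memLp_two i).integrable_mul (hX.memLp_two j)).const_mul _
  simp_rw [sq, Finset.sum_mul_sum, mul_mul_mul_comm _ (X _ _)]
  rw [integral_finsetSum _ fun i _ => integrable_finsetSum _ fun j _ => hint i j]
  refine Finset.sum_congr rfl fun i _ => ?_
  rw [integral_finsetSum _ fun j _ => hint i j]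
  simp_rw [integral_const_mul]

theorem charFun_map (hX : IsCenteredGaussianVector μ X) (t : EuclideanSpace ℝ ι) :
    charFun (μ.map fun ω => WithLp.toLp 2 fun i => X i ω) t =
      Complex.exp (-((∫ ω, (∑ i, t i * X i ω) ^ 2 ∂μ : ℝ) : ℂ) / 2) := by
  have hm : Measurable fun ω => WithLp.toLp 2 fun i => X i ω :=
    (WithLp.measurable_toLp 2 _).comp (measurable_pi_lambda _ hX.1)
  obtain ⟨v, hv⟩ := hX.2 t
  rw [← integral_cexp_of_map_eq_gaussianReal (hX.measurable_sum t) hv, charFun_apply,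
    integral_map hm.aemeasurable (by fun_prop)]
  simp [PiLp.inner_apply]

theorem linear_comp {κ : Type*} [Fintype κ] (hX : IsCenteredGaussianVector μ X)
    (A : κ → ι → ℝ) : IsCenteredGaussianVector μ fun k ω => ∑ i, A k i * X i ω := by
  refine ⟨fun k => hX.measurable_sum (A k), fun c => ?_⟩
  obtain ⟨v, hv⟩ := hX.2 fun i => ∑ k, c k * A k i
  refine ⟨v, ?_⟩
  rw [← hv]
  congr 1
  ext ω
  simp_rw [Finset.mul_sum, Finset.sum_mul]
  rw [Finset.sum_comm]
  simp_rw [mul_assoc]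

end IsCenteredGaussianVector

/-- The expected maximum of `n + 1` independent standard Gaussian random variables. -/
def gaussianMax (n : ℕ) : ℝ :=
  ∫ x, (⨆ i, x i) ∂(Measure.pi fun _ : Fin (n + 1) => gaussianReal 0 1)

theorem integrable_eval_pi_gaussianReal {ι : Type*} [Fintype ι] (i : ι) :
    Integrable (fun x : ι → ℝ => x i) (Measure.pi fun _ => gaussianReal 0 1) :=
  integrable_of_map_eq_gaussianReal (measurable_pi_apply i)
    (measurePreserving_eval (fun _ : ι => gaussianReal 0 1) i).map_eq

theorem integral_eval_pi_gaussianReal {ι : Type*} [Fintype ι] (i : ι) :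
    ∫ x : ι → ℝ, x i ∂(Measure.pi fun _ => gaussianReal 0 1) = 0 :=
  integral_of_map_eq_gaussianReal (measurable_pi_apply i)
    (measurePreserving_eval (fun _ : ι => gaussianReal 0 1) i).map_eq

/-- Adding an independent centered vector does not decrease the expected maximum. -/
theorem integral_iSup_le_integral_iSup_add {α β ι : Type*} [MeasurableSpace α]
    [MeasurableSpace β] [Fintype ι] [Nonempty ι] {μ : Measure α} {ν : Measure β}
    [IsProbabilityMeasure μ] [IsProbabilityMeasure ν] {Y : ι → α → ℝ} {Z : ι → β → ℝ}
    (hY : ∀ i, Integrable (Y i) μ) (hZ : ∀ i, Integrable (Z i) ν) (hZ0 : ∀ i, ∫ b, Z i b ∂ν = 0) :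
    ∫ a, (⨆ i, Y i a) ∂μ ≤ ∫ p, (⨆ i, (Y i p.1 + Z i p.2)) ∂(μ.prod ν) := by
  have hint : Integrable (fun p : α × β => ⨆ i, (Y i p.1 + Z i p.2)) (μ.prod ν) :=
    integrable_iSup_of_finite fun i => ((hY i).comp_fst ν).add ((hZ i).comp_snd μ)
  rw [integral_prod _ hint]
  refine integral_mono (integrable_iSup_of_finite hY) hint.integral_prod_left fun a => ?_
  refine ciSup_le fun i => ?_
  have hYZ : ∀ j, Integrable (fun b => Y j a + Z j b) ν := fun j => (integrable_const _).add (hZ j)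
  calc Y i a = ∫ b, (Y i a + Z i b) ∂ν := by
        rw [integral_add (integrable_const _) (hZ i), hZ0]; simp
    _ ≤ ∫ b, (⨆ j, (Y j a + Z j b)) ∂ν :=
        integral_mono (hYZ i) (integrable_iSup_of_finite hYZ) fun b =>
          le_ciSup (Finite.bddAbove_range fun j => Y j a + Z j b) i

theorem isCenteredGaussianVector_of_isGaussian {ι : Type*} [Fintype ι]
    {γ : Measure (EuclideanSpace ℝ ι)} [IsGaussian γ] (hγ : ∫ x, x ∂γ = 0) :
    IsCenteredGaussianVector γ fun i x => x i := by
  refine ⟨fun i => by fun_prop, fun c => ?_⟩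
  let L : StrongDual ℝ (EuclideanSpace ℝ ι) := innerSL ℝ (WithLp.toLp 2 c)
  have hL : (fun x : EuclideanSpace ℝ ι => ∑ i, c i * x i) = L := by
    ext x
    simp [L, PiLp.inner_apply, mul_comm]
  refine ⟨Var[L; γ].toNNReal, ?_⟩
  rw [hL, IsGaussian.map_eq_gaussianReal L, IsGaussian.integral_dual, hγ, map_zero]

theorem integral_iSup_stdGaussian (n : ℕ) :
    ∫ x, (⨆ i, x i) ∂(stdGaussian (EuclideanSpace ℝ (Fin (n + 1)))) = gaussianMax n := by
  rw [← map_pi_eq_stdGaussian, integral_map (by fun_prop)]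
  · rfl
  · exact (Measurable.iSup fun i => by fun_prop).aestronglyMeasurable

section Centering

variable {n : ℕ}

/-- The matrix of the map subtracting from a vector the mean of its entries. -/
def centeringMatrix (n : ℕ) (i j : Fin (n + 1)) : ℝ := (if i = j then 1 else 0) - 1 / (n + 1)

theorem sum_centeringMatrix_mul (x : Fin (n + 1) → ℝ) (i : Fin (n + 1)) :
    ∑ j, centeringMatrix n i j * x j = x i - (∑ j, x j) / (n + 1) := by
  simp only [centeringMatrix, sub_mul, Finset.sum_sub_distrib, ite_mul, one_mul, zero_mul,
    Finset.sum_ite_eq, Finset.mem_univ, if_true, ← Finset.mul_sum]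
  ring

theorem sum_mul_sum_centeringMatrix_mul (c x : Fin (n + 1) → ℝ) :
    ∑ i, c i * ∑ j, centeringMatrix n i j * x j =
      ∑ i, (∑ j, centeringMatrix n i j * c j) * x i := by
  simp_rw [sum_centeringMatrix_mul, mul_sub, sub_mul, Finset.sum_sub_distrib, ← Finset.sum_mul,
    ← Finset.mul_sum]
  ring

theorem sum_sum_centeringMatrix_mul (x : Fin (n + 1) → ℝ) :
    ∑ i, ∑ j, centeringMatrix n i j * x j = 0 := by
  simp_rw [sum_centeringMatrix_mul]
  rw [Finset.sum_sub_distrib, Finset.sum_const, Finset.card_univ, Fintype.card_fin, nsmul_eq_mul]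
  push_cast
  field_simp
  ring

theorem sum_sq_sum_centeringMatrix_mul (x : Fin (n + 1) → ℝ) :
    ∑ i, (∑ j, centeringMatrix n i j * x j) ^ 2 =
      ∑ i, ∑ j, x i * x j * centeringMatrix n i j := by
  have h1 : ∀ i, ∑ j, x i * x j * centeringMatrix n i j
      = x i * (x i - (∑ j, x j) / (n + 1)) := fun i => by
    rw [← sum_centeringMatrix_mul, Finset.mul_sum]
    exact Finset.sum_congr rfl fun j _ => by ring
  simp_rw [h1, sum_centeringMatrix_mul, sub_sq, mul_sub, Finset.sum_add_distrib,
    Finset.sum_sub_distrib, ← Finset.sum_mul, ← Finset.mul_sum, Finset.sum_const, Finset.card_univ,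
    Fintype.card_fin, nsmul_eq_mul]
  push_cast
  field_simp
  ring

theorem iSup_sum_centeringMatrix_mul (x : Fin (n + 1) → ℝ) :
    ⨆ i, ∑ j, centeringMatrix n i j * x j = (⨆ i, x i) - (∑ j, x j) / (n + 1) := by
  simp_rw [sum_centeringMatrix_mul, sub_eq_add_neg, iSup_add_const_of_finite]

theorem IsCenteredGaussianVector.integral_iSup_centering {Ω : Type*} [MeasurableSpace Ω]
    {μ : Measure Ω} {X : Fin (n + 1) → Ω → ℝ} (hX : IsCenteredGaussianVector μ X) :
    ∫ ω, (⨆ i, ∑ j, centeringMatrix n i j * X j ω) ∂μ = ∫ ω, (⨆ i, X i ω) ∂μ := by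
  simp_rw [iSup_sum_centeringMatrix_mul]
  rw [integral_sub (integrable_iSup_of_finite hX.integrable)
    ((integrable_finsetSum _ fun i _ => hX.integrable i).div_const _), integral_div,
    integral_finsetSum _ fun i _ => hX.integrable i]
  simp [hX.integral_eq_zero]

end Centering

theorem integral_sq_sum_stdGaussian {ι : Type*} [Fintype ι] (c : ι → ℝ) :
    ∫ x, (∑ i, c i * x i) ^ 2 ∂(stdGaussian (EuclideanSpace ℝ ι)) = ∑ i, c i ^ 2 := by
  let L : StrongDual ℝ (EuclideanSpace ℝ ι) := innerSL ℝ (WithLp.toLp 2 c)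
  have hL : (fun x : EuclideanSpace ℝ ι => ∑ i, c i * x i) = L := by
    ext x
    simp [L, PiLp.inner_apply, mul_comm]
  have h := variance_dual_stdGaussian L
  rw [variance_of_integral_eq_zero (by fun_prop) (integral_strongDual_stdGaussian L), ← hL] at h
  rw [h, innerSL_apply_norm, EuclideanSpace.real_norm_sq_eq]

/-- A comparison inequality of Sudakov–Fernique type: a centered Gaussian vector whose
contrasts have variance at least that of `σ` times a standard Gaussian vector has
a larger expected maximum. -/
theorem mul_gaussianMax_le {n : ℕ} {Ω : Type*} [MeasurableSpace Ω] {μ : Measure Ω}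
    [IsProbabilityMeasure μ] {X : Fin (n + 1) → Ω → ℝ} (hX : IsCenteredGaussianVector μ X)
    {σ : ℝ} (hσ : 0 ≤ σ)
    (hvar : ∀ c : Fin (n + 1) → ℝ, ∑ i, c i = 0 →
      σ ^ 2 * ∑ i, c i ^ 2 ≤ ∫ ω, (∑ i, c i * X i ω) ^ 2 ∂μ) :
    σ * gaussianMax n ≤ ∫ ω, (⨆ i, X i ω) ∂μ := by
  let E := EuclideanSpace ℝ (Fin (n + 1))
  have hD := hX.linear_comp (centeringMatrix n)
  set D : Fin (n + 1) → Ω → ℝ := fun i ω => ∑ j, centeringMatrix n i j * X j ω with hDdef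
  let S : Matrix (Fin (n + 1)) (Fin (n + 1)) ℝ := fun i j =>
    ∫ ω, D i ω * D j ω ∂μ - σ ^ 2 * centeringMatrix n i j
  have hSx : ∀ x : Fin (n + 1) → ℝ, x ⬝ᵥ S.mulVec x = ∫ ω, (∑ i, x i * D i ω) ^ 2 ∂μ -
      σ ^ 2 * ∑ i, (∑ j, centeringMatrix n i j * x j) ^ 2 := fun x => by
    rw [hD.integral_sq_sum, sum_sq_sum_centeringMatrix_mul, Finset.mul_sum,
      ← Finset.sum_sub_distrib]
    refine Finset.sum_congr rfl fun i _ => ?_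
    rw [Finset.mul_sum, ← Finset.sum_sub_distrib, Matrix.mulVec, dotProduct, Finset.mul_sum]
    exact Finset.sum_congr rfl fun j _ => by simp only [S]; ring
  have hS : S.PosSemidef := by
    refine .of_dotProduct_mulVec_nonneg ?_ fun x => ?_
    · ext i j
      rw [Matrix.conjTranspose_apply, star_trivial]
      simp only [S, centeringMatrix, eq_comm (a := i), mul_comm (D i _)]
    · rw [star_trivial, hSx]
      simp_rw [hDdef, sum_mul_sum_centeringMatrix_mul]
      exact sub_nonneg.2 (hvar _ (sum_sum_centeringMatrix_mul x))
  have hstd : IsCenteredGaussianVector (stdGaussian E) fun i x => x i :=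
    isCenteredGaussianVector_of_isGaussian integral_id_stdGaussian
  have hmul : IsCenteredGaussianVector (multivariateGaussian 0 S) fun i x => x i :=
    isCenteredGaussianVector_of_isGaussian integral_id_multivariateGaussian
  have hY := hstd.linear_comp fun i j => σ * centeringMatrix n i j
  set Y : Fin (n + 1) → E → ℝ := fun i y => ∑ j, σ * centeringMatrix n i j * y j with hYdef
  have hYm : Measurable fun y : E => WithLp.toLp 2 fun i => Y i y :=
    (WithLp.measurable_toLp 2 _).comp (measurable_pi_lambda _ hY.1)
  have hDm : Measurable fun ω => WithLp.toLp 2 fun i => D i ω :=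
    (WithLp.measurable_toLp 2 _).comp (measurable_pi_lambda _ hD.1)
  have hYeq : ∀ i y, Y i y = σ * ∑ j, centeringMatrix n i j * y j := fun i y => by
    simp [hYdef, Finset.mul_sum, mul_assoc]
  have : IsProbabilityMeasure ((stdGaussian E).map fun y => WithLp.toLp 2 fun i => Y i y) :=
    Measure.isProbabilityMeasure_map hYm.aemeasurable
  have : IsProbabilityMeasure (μ.map fun ω => WithLp.toLp 2 fun i => D i ω) :=
    Measure.isProbabilityMeasure_map hDm.aemeasurable
  have hlaw : (((stdGaussian E).map fun y => WithLp.toLp 2 fun i => Y i y).prod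
      (multivariateGaussian 0 S)).map (fun p => p.1 + p.2) =
      μ.map fun ω => WithLp.toLp 2 fun i => D i ω := by
    refine Measure.ext_of_charFun (E := E) ?_
    rw [charFun_map_add_prod_eq_mul]
    ext t
    rw [Pi.mul_apply, hY.charFun_map, charFun_multivariateGaussian hS, hD.charFun_map, hSx,
      ← Complex.exp_add]
    have h1 : ∫ y : E, (∑ i, t i * Y i y) ^ 2 ∂(stdGaussian E) =
        σ ^ 2 * ∑ i, (∑ j, centeringMatrix n i j * t j) ^ 2 := by
      simp_rw [hYeq, mul_left_comm _ σ, ← Finset.mul_sum, sum_mul_sum_centeringMatrix_mul, mul_pow]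
      rw [integral_const_mul, integral_sq_sum_stdGaussian]
    rw [h1]
    congr 1
    simp
    ring
  calc σ * gaussianMax n = ∫ y, (⨆ i, Y i y) ∂(stdGaussian E) := by
        simp_rw [hYeq, ← Real.mul_iSup_of_nonneg hσ]
        rw [integral_const_mul, hstd.integral_iSup_centering, integral_iSup_stdGaussian]
    _ ≤ ∫ p, (⨆ i, (Y i p.1 + p.2 i)) ∂((stdGaussian E).prod (multivariateGaussian 0 S)) :=
        integral_iSup_le_integral_iSup_add hY.integrable hmul.integrable hmul.integral_eq_zero
    _ = ∫ x : EuclideanSpace ℝ (Fin (n + 1)), (⨆ i, x.ofLp i)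
          ∂(μ.map fun ω => WithLp.toLp 2 fun i => D i ω) := by
        have hprod := Measure.map_prod_map (stdGaussian E) (multivariateGaussian 0 S) hYm
          measurable_id
        rw [Measure.map_id] at hprod
        have hYm' := hYm.prodMap (measurable_id (α := E))
        rw [← hlaw, integral_map (by fun_prop)
          (Measurable.iSup fun i => by fun_prop).aestronglyMeasurable, hprod,
          integral_map hYm'.aemeasurable
            (Measurable.iSup fun i => by fun_prop).aestronglyMeasurable]
        rfl
    _ = ∫ ω, (⨆ i, X i ω) ∂μ := by
        rw [integral_map hDm.aemeasurable
          (Measurable.iSup fun i => by fun_prop).aestronglyMeasurable]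
        exact hX.integral_iSup_centering

section ThreePoints

theorem integral_abs_gaussianReal (v : NNReal) :
    ∫ x, |x| ∂(gaussianReal 0 v) = √(2 / π) * √v := by
  rcases eq_or_ne v 0 with rfl | hv
  · simp
  have hv0 : (0 : ℝ) < v := by positivity
  rw [integral_gaussianReal_eq_integral_smul hv]
  have h1 : ∀ x : ℝ, gaussianPDFReal 0 v x • |x| =
      (fun y : ℝ => (√(2 * π * v))⁻¹ *
        (y ^ (1 : ℝ) * rexp (-(2 * v : ℝ)⁻¹ * y ^ (2 : ℝ)))) |x| := by
    intro x
    simp only [gaussianPDFReal, smul_eq_mul, rpow_one, rpow_two, sub_zero, sq_abs]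
    rw [mul_comm (|x|), ← mul_assoc]
    congr 3
    field_simp
  simp_rw [h1]
  rw [integral_comp_abs (f := fun y : ℝ =>
      (√(2 * π * v))⁻¹ * (y ^ (1 : ℝ) * rexp (-(2 * v : ℝ)⁻¹ * y ^ (2 : ℝ)))), integral_const_mul,
    integral_rpow_mul_exp_neg_mul_rpow (by norm_num) (by norm_num) (by positivity)]
  rw [show -((1 : ℝ) + 1) / 2 = -1 by norm_num, show ((1 : ℝ) + 1) / 2 = 1 by norm_num,
    Real.Gamma_one, rpow_neg_one, inv_inv, ← Real.sqrt_mul (by positivity)]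
  have h2 : √(2 * π * v) * √(2 / π * v) = 2 * v := by
    rw [← Real.sqrt_mul (by positivity), show 2 * π * v * (2 / π * v) = (2 * (v : ℝ)) ^ 2 by
      field_simp]
    exact Real.sqrt_sq (by positivity)
  have h3 : √(2 * π * v) ≠ 0 := by positivity
  rw [← mul_right_inj' h3, h2]
  field_simp

variable {Ω : Type*} [MeasurableSpace Ω] {μ : Measure Ω}

theorem integral_abs_of_map_eq_gaussianReal {Y : Ω → ℝ} {v : NNReal} (hY : Measurable Y)
    (h : μ.map Y = gaussianReal 0 v) :
    ∫ ω, |Y ω| ∂μ = √(2 / π) * √(∫ ω, Y ω ^ 2 ∂μ) := by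
  rw [integral_sq_of_map_eq_gaussianReal hY h, ← integral_abs_gaussianReal, ← h,
    integral_map hY.aemeasurable (by fun_prop)]

theorem IsCenteredGaussianVector.exists_map_sub {ι : Type*} [Fintype ι] {X : ι → Ω → ℝ}
    (hX : IsCenteredGaussianVector μ X) (i j : ι) :
    ∃ v : NNReal, μ.map (fun ω => X i ω - X j ω) = gaussianReal 0 v := by
  classical
  obtain ⟨v, hv⟩ := hX.2 (Pi.single i 1 - Pi.single j 1)
  refine ⟨v, ?_⟩
  rw [← hv]
  congr 1
  ext ω
  simp [Pi.single_apply, sub_mul, Finset.sum_sub_distrib]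

theorem IsCenteredGaussianVector.integral_iSup_neg [IsProbabilityMeasure μ] {ι : Type*} [Fintype ι]
    {X : ι → Ω → ℝ} (hX : IsCenteredGaussianVector μ X) :
    ∫ ω, (⨆ i, -X i ω) ∂μ = ∫ ω, (⨆ i, X i ω) ∂μ := by
  classical
  have hN : IsCenteredGaussianVector μ fun i ω => -X i ω := by
    have := hX.linear_comp fun i j => if i = j then -1 else 0
    simpa using this
  have hXm : Measurable fun ω => WithLp.toLp 2 fun i => X i ω :=
    (WithLp.measurable_toLp 2 _).comp (measurable_pi_lambda _ hX.1)
  have hNm : Measurable fun ω => WithLp.toLp 2 fun i => -X i ω :=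
    (WithLp.measurable_toLp 2 _).comp (measurable_pi_lambda _ hN.1)
  have := Measure.isProbabilityMeasure_map (μ := μ) hXm.aemeasurable
  have := Measure.isProbabilityMeasure_map (μ := μ) hNm.aemeasurable
  have hlaw : (μ.map fun ω => WithLp.toLp 2 fun i => -X i ω) =
      μ.map fun ω => WithLp.toLp 2 fun i => X i ω := by
    refine Measure.ext_of_charFun ?_
    ext t
    rw [hX.charFun_map, hN.charFun_map]
    simp [Finset.sum_neg_distrib]
  have hm : Measurable fun x : EuclideanSpace ℝ ι => ⨆ i, x i :=
    Measurable.iSup fun i => by fun_prop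
  calc ∫ ω, (⨆ i, -X i ω) ∂μ
      = ∫ x, (⨆ i, x.ofLp i) ∂(μ.map fun ω => WithLp.toLp 2 fun i => -X i ω) := by
        rw [integral_map hNm.aemeasurable hm.aestronglyMeasurable]
    _ = ∫ ω, (⨆ i, X i ω) ∂μ := by
        rw [hlaw, integral_map hXm.aemeasurable hm.aestronglyMeasurable]

theorem ciSup_fin_three (x : Fin 3 → ℝ) : ⨆ i, x i = max (x 0) (max (x 1) (x 2)) := by
  refine le_antisymm (ciSup_le fun i => ?_) ?_
  · fin_cases i <;> simp
  · have h := le_ciSup (Finite.bddAbove_range x)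
    exact max_le (h 0) (max_le (h 1) (h 2))

theorem iSup_add_iSup_neg_fin_three (x : Fin 3 → ℝ) :
    (⨆ i, x i) + ⨆ i, -x i = (|x 0 - x 1| + |x 1 - x 2| + |x 0 - x 2|) / 2 := by
  rw [ciSup_fin_three, ciSup_fin_three]
  generalize x 0 = a
  generalize x 1 = b
  generalize x 2 = c
  simp only [max_def, abs_eq_max_neg]
  split_ifs <;> linarith

/-- The expected maximum of three jointly Gaussian centered variables. -/
theorem IsCenteredGaussianVector.integral_iSup_fin_three [IsProbabilityMeasure μ]
    {X : Fin 3 → Ω → ℝ} (hX : IsCenteredGaussianVector μ X) :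
    ∫ ω, (⨆ i, X i ω) ∂μ = √(2 / π) / 4 * (√(∫ ω, (X 0 ω - X 1 ω) ^ 2 ∂μ) +
      √(∫ ω, (X 1 ω - X 2 ω) ^ 2 ∂μ) + √(∫ ω, (X 0 ω - X 2 ω) ^ 2 ∂μ)) := by
  have habs : ∀ i j, ∫ ω, |X i ω - X j ω| ∂μ = √(2 / π) * √(∫ ω, (X i ω - X j ω) ^ 2 ∂μ) :=
    fun i j =>
      let ⟨_, hv⟩ := hX.exists_map_sub i j
      integral_abs_of_map_eq_gaussianReal ((hX.1 i).sub (hX.1 j)) hv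
  have hint : ∀ i j, Integrable (fun ω => |X i ω - X j ω|) μ := fun i j =>
    ((hX.integrable i).sub (hX.integrable j)).abs
  have hsum : ∫ ω, (⨆ i, X i ω) ∂μ + ∫ ω, (⨆ i, -X i ω) ∂μ =
      (∫ ω, |X 0 ω - X 1 ω| ∂μ + ∫ ω, |X 1 ω - X 2 ω| ∂μ + ∫ ω, |X 0 ω - X 2 ω| ∂μ) / 2 := by
    have hneg : Integrable (fun ω => ⨆ i, -X i ω) μ :=
      integrable_iSup_of_finite fun i => (hX.integrable i).neg
    rw [← integral_add (integrable_iSup_of_finite hX.integrable) hneg]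
    simp_rw [iSup_add_iSup_neg_fin_three]
    have h012 : Integrable (fun ω => |X 0 ω - X 1 ω| + |X 1 ω - X 2 ω|) μ :=
      (hint 0 1).add (hint 1 2)
    rw [integral_div, integral_add h012 (hint 0 2), integral_add (hint 0 1) (hint 1 2)]
  rw [hX.integral_iSup_neg, habs, habs, habs] at hsum
  linarith

end ThreePoints

section GaussianMaximumGrowth

/-- The expected maximum of a standard Gaussian variable and a constant. -/
def gaussianMaxConst (m : ℝ) : ℝ := ∫ a, max a m ∂(gaussianReal 0 1)

theorem integrable_id_gaussianReal : Integrable (fun a : ℝ => a) (gaussianReal 0 1) :=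
  integrable_of_map_eq_gaussianReal measurable_id Measure.map_id

theorem integrable_max_const_gaussianReal (m : ℝ) :
    Integrable (fun a : ℝ => max a m) (gaussianReal 0 1) :=
  integrable_id_gaussianReal.sup (integrable_const m)

theorem gaussianMaxConst_mono : Monotone gaussianMaxConst := fun m m' h =>
  integral_mono (integrable_max_const_gaussianReal m) (integrable_max_const_gaussianReal m')
    fun _ => max_le_max le_rfl h

theorem gaussianMaxConst_gaussianMax_le (n : ℕ) :
    gaussianMaxConst (gaussianMax n) ≤ gaussianMax (n + 1) := by
  let γ : Measure ℝ := gaussianReal 0 1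
  let γn : Measure (Fin (n + 1) → ℝ) := Measure.pi fun _ => γ
  have hsup : ∀ x : Fin (n + 1 + 1) → ℝ, ⨆ i, x i = max (x 0) (⨆ i : Fin (n + 1), x i.succ) := by
    intro x
    refine le_antisymm (ciSup_le fun i => ?_) (max_le (le_ciSup (Finite.bddAbove_range x) 0)
      (ciSup_le fun i => le_ciSup (Finite.bddAbove_range x) i.succ))
    refine Fin.cases (le_max_left _ _) (fun j => le_max_of_le_right ?_) i
    exact le_ciSup (Finite.bddAbove_range fun k : Fin (n + 1) => x k.succ) j
  have hmp := measurePreserving_piFinSuccAbove (fun _ : Fin (n + 1 + 1) => γ) 0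
  have hF : Integrable (fun y : Fin (n + 1) → ℝ => ⨆ i, y i) γn :=
    integrable_iSup_of_finite integrable_eval_pi_gaussianReal
  have hint : Integrable (fun p : ℝ × (Fin (n + 1) → ℝ) => max p.1 (⨆ i, p.2 i)) (γ.prod γn) :=
    (integrable_id_gaussianReal.comp_fst γn).sup (hF.comp_snd γ)
  have heq : gaussianMax (n + 1) = ∫ p, max p.1 (⨆ i, p.2 i) ∂(γ.prod γn) := by
    rw [← hmp.integral_comp']
    simp only [gaussianMax, hsup]
    rfl
  rw [heq, integral_prod _ hint]
  refine integral_mono (integrable_max_const_gaussianReal _) hint.integral_prod_left fun a => ?_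
  have hmax : Integrable (fun y : Fin (n + 1) → ℝ => max a (⨆ i, y i)) γn :=
    (integrable_const a).sup hF
  refine max_le ?_ (integral_mono hF hmax fun y => le_max_right _ _)
  calc a = ∫ _, a ∂γn := by simp
    _ ≤ _ := integral_mono (integrable_const a) hmax fun y => le_max_left _ _

theorem gaussianMax_zero : gaussianMax 0 = 0 :=
  (integral_congr_ae (ae_of_all _ fun x => ciSup_unique (ι := Fin 1) (s := x))).trans
    (integral_eval_pi_gaussianReal (ι := Fin (0 + 1)) 0)

theorem integral_mul_exp_neg_sq_div_two :
    ∫ x in Ioi (0 : ℝ), x * rexp (-x ^ 2 / 2) = 1 := by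
  have h := integral_rpow_mul_exp_neg_mul_rpow (p := 2) (q := 1) (b := 1 / 2) (by norm_num)
    (by norm_num) (by norm_num)
  rw [show -((1 : ℝ) + 1) / 2 = -1 by norm_num, show ((1 : ℝ) + 1) / 2 = 1 by norm_num,
    Real.Gamma_one, rpow_neg_one] at h
  simp only [rpow_one, rpow_two] at h
  calc _ = _ := by
        congr 1
        ext x
        congr 2
        ring
    _ = _ := h
    _ = 1 := by norm_num

theorem integral_sq_mul_exp_neg_sq_div_two :
    ∫ x in Ioi (0 : ℝ), x ^ 2 * rexp (-x ^ 2 / 2) = √(π / 2) := by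
  have h := integral_rpow_mul_exp_neg_mul_rpow (p := 2) (q := 2) (b := 1 / 2) (by norm_num)
    (by norm_num) (by norm_num)
  rw [show ((2 : ℝ) + 1) / 2 = 1 / 2 + 1 by norm_num, Real.Gamma_add_one (by norm_num),
    Real.Gamma_one_half_eq] at h
  simp only [rpow_two] at h
  calc _ = _ := by
        congr 1
        ext x
        congr 2
        ring
    _ = _ := h
    _ = √(π / 2) := by
        rw [show -((2 : ℝ) + 1) / 2 = -1 + -(1 / 2) by norm_num, rpow_add (by norm_num),
          rpow_neg_one, rpow_neg (by norm_num), ← Real.sqrt_eq_rpow, Real.sqrt_div' _ (by norm_num),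
          Real.sqrt_div' _ (by norm_num)]
        have : √2 ^ 2 = 2 := Real.sq_sqrt (by norm_num)
        have : √(2 : ℝ) ≠ 0 := by positivity
        field_simp
        simp

theorem add_mul_exp_le_gaussianMaxConst (m : ℝ) :
    m + (√(2 * π))⁻¹ * rexp (-m ^ 2 / 2 - √(π / 2) * m) ≤ gaussianMaxConst m := by
  set κ := √(π / 2)
  set K := (√(2 * π))⁻¹
  have hpos : Integrable (fun a : ℝ => max (a - m) 0) (gaussianReal 0 1) :=
    (integrable_id_gaussianReal.sub (integrable_const m)).pos_part
  have h1 : gaussianMaxConst m = m + ∫ a, max (a - m) 0 ∂(gaussianReal 0 1) := by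
    have : ∀ a : ℝ, max a m = m + max (a - m) 0 := fun a => by
      rw [← max_add_add_left]
      simp
    simp_rw [gaussianMaxConst, this]
    rw [integral_add (integrable_const _) hpos]
    simp
  rw [h1, integral_gaussianReal_eq_integral_smul one_ne_zero]
  gcongr
  have hpos' : Integrable (fun a : ℝ => gaussianPDFReal 0 1 a • max (a - m) 0) := by
    rw [gaussianReal_of_var_ne_zero _ one_ne_zero] at hpos
    simpa [gaussianPDF, toReal_gaussianPDF, gaussianPDFReal_nonneg] using
      (integrable_withDensity_iff_integrable_smul' (measurable_gaussianPDF 0 1)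
        (ae_of_all _ fun _ => gaussianPDF_lt_top)).1 hpos
  rw [← integral_add_right_eq_self _ m]
  have hx1 : IntegrableOn (fun x : ℝ => x * rexp (-x ^ 2 / 2)) (Ioi 0) :=
    Integrable.of_integral_ne_zero (by rw [integral_mul_exp_neg_sq_div_two]; norm_num)
  have hx2 : IntegrableOn (fun x : ℝ => x ^ 2 * rexp (-x ^ 2 / 2)) (Ioi 0) :=
    Integrable.of_integral_ne_zero (by rw [integral_sq_mul_exp_neg_sq_div_two]; positivity)
  have hG : IntegrableOn (fun x : ℝ => K * rexp (-m ^ 2 / 2 - κ * m) *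
      ((1 + m * κ) * (x * rexp (-x ^ 2 / 2)) - m * (x ^ 2 * rexp (-x ^ 2 / 2)))) (Ioi 0) :=
    ((hx1.const_mul _).sub (hx2.const_mul _)).const_mul _
  calc K * rexp (-m ^ 2 / 2 - κ * m)
      = ∫ x in Ioi (0 : ℝ), K * rexp (-m ^ 2 / 2 - κ * m) *
        ((1 + m * κ) * (x * rexp (-x ^ 2 / 2)) - m * (x ^ 2 * rexp (-x ^ 2 / 2))) := by
        rw [integral_const_mul, integral_sub (hx1.const_mul _) (hx2.const_mul _),
          integral_const_mul, integral_const_mul, integral_mul_exp_neg_sq_div_two,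
          integral_sq_mul_exp_neg_sq_div_two]
        ring
    _ = ∫ x, (Ioi 0).indicator (fun x : ℝ => K * rexp (-m ^ 2 / 2 - κ * m) *
        ((1 + m * κ) * (x * rexp (-x ^ 2 / 2)) - m * (x ^ 2 * rexp (-x ^ 2 / 2)))) x :=
        (integral_indicator measurableSet_Ioi).symm
    _ ≤ _ := by
        refine integral_mono (hG.integrable_indicator measurableSet_Ioi)
          (hpos'.comp_add_right m) fun x => ?_
        rcases le_or_gt x 0 with hx | hx
        · rw [indicator_of_notMem (by simpa using hx)]
          exact mul_nonneg (gaussianPDFReal_nonneg _ _ _) (le_max_right _ _)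
        · rw [indicator_of_mem (by simpa using hx)]
          have htan := Real.add_one_le_exp (κ * m - m * x)
          simp only [gaussianPDFReal, smul_eq_mul, add_sub_cancel_right, max_eq_left hx.le,
            NNReal.coe_one, mul_one, sub_zero]
          have hexp : rexp (-(x + m) ^ 2 / 2) =
              rexp (-m ^ 2 / 2 - κ * m) * rexp (-x ^ 2 / 2) * rexp (κ * m - m * x) := by
            rw [← Real.exp_add, ← Real.exp_add]
            congr 1
            ring
          rw [hexp]
          have hc : 0 ≤ K * rexp (-m ^ 2 / 2 - κ * m) * rexp (-x ^ 2 / 2) * x := by positivity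
          nlinarith [mul_le_mul_of_nonneg_left htan hc]

theorem add_le_gaussianMax_succ {n : ℕ} {m : ℝ} (h : m ≤ gaussianMax n) :
    m + (√(2 * π))⁻¹ * rexp (-m ^ 2 / 2 - √(π / 2) * m) ≤ gaussianMax (n + 1) :=
  ((add_mul_exp_le_gaussianMaxConst m).trans (gaussianMaxConst_mono h)).trans
    (gaussianMaxConst_gaussianMax_le n)

/-- A lower bound for the increment of the expected Gaussian maximum past the level `m`. -/
def gaussianMaxIncrement (m : ℝ) : ℝ := (√(2 * π))⁻¹ * rexp (-m ^ 2 / 2 - √(π / 2) * m)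

theorem gaussianMaxIncrement_pos (m : ℝ) : 0 < gaussianMaxIncrement m := by
  unfold gaussianMaxIncrement
  positivity

theorem gaussianMaxIncrement_antitoneOn : AntitoneOn gaussianMaxIncrement (Ici 0) := by
  intro a ha b _ hab
  have ha : 0 ≤ a := ha
  unfold gaussianMaxIncrement
  have h1 : a ^ 2 ≤ b ^ 2 := by gcongr
  have h2 : √(π / 2) * a ≤ √(π / 2) * b := by gcongr
  gcongr

theorem lt_inv_sqrt_two_mul_pi : 0.3989 < (√(2 * π))⁻¹ := by
  rw [lt_inv_comm₀ (by norm_num) (by positivity), Real.sqrt_lt' (by norm_num)]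
  have := Real.pi_lt_d6
  norm_num
  linarith

theorem sqrt_pi_div_two_lt : √(π / 2) < 1.2534 := by
  rw [Real.sqrt_lt' (by norm_num)]
  have := Real.pi_lt_d6
  norm_num
  linarith

theorem le_gaussianMaxIncrement {m : ℝ} (hm : 0 ≤ m) :
    0.3989 * rexp (-(m ^ 2 / 2 + 1.2534 * m)) ≤ gaussianMaxIncrement m := by
  unfold gaussianMaxIncrement
  gcongr
  · exact lt_inv_sqrt_two_mul_pi.le
  · nlinarith [sqrt_pi_div_two_lt]

theorem gaussianMax_le_succ (n : ℕ) : gaussianMax n ≤ gaussianMax (n + 1) := by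
  have h := add_le_gaussianMax_succ (le_refl (gaussianMax n))
  have := gaussianMaxIncrement_pos (gaussianMax n)
  unfold gaussianMaxIncrement at this
  linarith

theorem min_add_mul_le_gaussianMax_add {T δ m : ℝ} {n : ℕ} (hδ : 0 ≤ δ)
    (hT : δ ≤ gaussianMaxIncrement T) (hm : 0 ≤ m) (h : m ≤ gaussianMax n) (k : ℕ) :
    min T (m + k * δ) ≤ gaussianMax (n + k) := by
  induction k with
  | zero => simpa using Or.inr h
  | succ k ih =>
    rw [← add_assoc]
    rcases le_or_gt T (m + k * δ) with hk | hk
    · rw [min_eq_left hk] at ih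
      exact (min_le_left _ _).trans (ih.trans (gaussianMax_le_succ _))
    · rw [min_eq_right hk.le] at ih
      have h0 : 0 ≤ m + k * δ := by positivity
      have h1 := add_le_gaussianMax_succ ih
      have h2 := gaussianMaxIncrement_antitoneOn h0 (h0.trans hk.le : (0 : ℝ) ≤ T) hk.le
      refine (min_le_right _ _).trans (le_trans ?_ h1)
      unfold gaussianMaxIncrement at h2 hT
      push_cast
      linarith

theorem le_gaussianMax_thirtyTwo : 1.45 ≤ gaussianMax 32 := by
  have he : rexp 1 < 2.7182818286 := Real.exp_one_lt_d9
  have h1 : 0.3989 ≤ gaussianMax 1 := by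
    have h := add_le_gaussianMax_succ gaussianMax_zero.ge
    have := lt_inv_sqrt_two_mul_pi
    norm_num at h this ⊢
    linarith
  have hδ : 0.068 ≤ gaussianMaxIncrement 1 := by
    refine le_trans ?_ (le_gaussianMaxIncrement zero_le_one)
    have h4 : rexp (1.76) ≤ 5.86 := by
      have : rexp 1.76 ^ 25 = rexp 1 ^ 44 := by
        rw [← Real.exp_nat_mul, ← Real.exp_nat_mul]
        norm_num
      refine le_of_pow_le_pow_left₀ (n := 25) (by norm_num) (by norm_num) ?_
      rw [this]
      calc rexp 1 ^ 44 ≤ 2.7182818286 ^ 44 := by gcongr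
        _ ≤ _ := by norm_num
    have h5 : (5.86 : ℝ)⁻¹ ≤ rexp (-(1 ^ 2 / 2 + 1.2534 * 1)) := by
      calc (5.86 : ℝ)⁻¹ ≤ (rexp 1.76)⁻¹ := by gcongr
        _ = rexp (-1.76) := (Real.exp_neg _).symm
        _ ≤ _ := by
          gcongr
          norm_num
    norm_num at h5 ⊢
    linarith
  have hε : 0.0215 ≤ gaussianMaxIncrement 1.45 := by
    refine le_trans ?_ (le_gaussianMaxIncrement (by norm_num))
    have h4 : rexp (2.875) ≤ 18 := by
      have : rexp 2.875 ^ 8 = rexp 1 ^ 23 := by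
        rw [← Real.exp_nat_mul, ← Real.exp_nat_mul]
        norm_num
      refine le_of_pow_le_pow_left₀ (n := 8) (by norm_num) (by norm_num) ?_
      rw [this]
      calc rexp 1 ^ 23 ≤ 2.7182818286 ^ 23 := by gcongr
        _ ≤ _ := by norm_num
    have h5 : (18 : ℝ)⁻¹ ≤ rexp (-(1.45 ^ 2 / 2 + 1.2534 * 1.45)) := by
      calc (18 : ℝ)⁻¹ ≤ (rexp 2.875)⁻¹ := by gcongr
        _ = rexp (-2.875) := (Real.exp_neg _).symm
        _ ≤ _ := by
          gcongr
          norm_num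
    norm_num at h5 ⊢
    linarith
  have h10 : 1 ≤ gaussianMax 10 := by
    have := min_add_mul_le_gaussianMax_add (by norm_num) hδ (by norm_num) h1 9
    rwa [min_eq_left (by norm_num)] at this
  have := min_add_mul_le_gaussianMax_add (by norm_num) hε zero_le_one h10 22
  rwa [min_eq_left (by norm_num)] at this

theorem log_thirtyThree_lt : Real.log 33 < 3.5 := by
  rw [Real.log_lt_iff_lt_exp (by norm_num)]
  have he : (2.7182818283 : ℝ) < rexp 1 := Real.exp_one_gt_d9
  have : rexp 3.5 ^ 2 = rexp 1 ^ 7 := by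
    rw [← Real.exp_nat_mul, ← Real.exp_nat_mul]
    norm_num
  refine lt_of_pow_lt_pow_left₀ 2 (by positivity) ?_
  rw [this]
  calc (33 : ℝ) ^ 2 < 2.7182818283 ^ 7 := by norm_num
    _ ≤ _ := by gcongr

theorem lt_log_thirtyThree : 3.46 < Real.log 33 := by
  have h : Real.log 32 ≤ Real.log 33 := Real.log_le_log (by norm_num) (by norm_num)
  have h2 : Real.log 32 = 5 * Real.log 2 := by
    rw [show (32 : ℝ) = 2 ^ 5 by norm_num, Real.log_pow]
    norm_num
  have := Real.log_two_gt_d9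
  linarith

/-- The expected maximum of `n + 1` independent standard Gaussian variables is at least
`√(3/5 log (n + 1))` once `n ≥ 32`. -/
theorem sqrt_log_le_gaussianMax {n : ℕ} (hn : 32 ≤ n) :
    √(3 / 5 * Real.log (n + 1)) ≤ gaussianMax n := by
  induction n, hn using Nat.le_induction with
  | base =>
    refine le_trans ?_ le_gaussianMax_thirtyTwo
    rw [Real.sqrt_le_left (by norm_num)]
    have := log_thirtyThree_lt
    norm_num
    linarith
  | succ n hn ih =>
    have hn' : (32 : ℝ) ≤ n := by exact_mod_cast hn
    set N : ℝ := n + 1 with hN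
    have hN0 : 0 < N := by linarith
    set m := √(3 / 5 * Real.log N) with hm
    have hlog : Real.log 33 ≤ Real.log N := Real.log_le_log (by norm_num) (by linarith)
    have hlog' : 3.46 < Real.log N := lt_log_thirtyThree.trans_le hlog
    have hm2 : m ^ 2 = 3 / 5 * Real.log N := Real.sq_sqrt (by linarith)
    have hm1 : 1.44 ≤ m := Real.le_sqrt_of_sq_le (by linarith)
    refine le_trans ?_ (add_le_gaussianMax_succ ih)
    have hNm : N⁻¹ = rexp (-(5 / 3 * m ^ 2)) := by
      rw [hm2, Real.exp_neg, ← mul_assoc]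
      norm_num
      rw [Real.exp_log hN0]
    have hinc : 0.3 * N⁻¹ / m ≤ gaussianMaxIncrement m := by
      refine le_trans ?_ (le_gaussianMaxIncrement (by linarith))
      have hexp : N⁻¹ ≤ rexp (-(m ^ 2 / 2 + 1.2534 * m)) := by
        rw [hNm]
        gcongr
        nlinarith
      rw [div_le_iff₀ (by linarith)]
      have hN' : 0 < N⁻¹ := by positivity
      nlinarith
    have hlogadd : Real.log (N + 1) ≤ Real.log N + N⁻¹ := by
      have h := Real.log_le_sub_one_of_pos (show 0 < (N + 1) / N by positivity)
      rw [Real.log_div (by positivity) (by positivity)] at h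
      have : (N + 1) / N - 1 = N⁻¹ := by field_simp; ring
      linarith
    push_cast
    rw [← hN]
    have : m + 0.3 * N⁻¹ / m ≤ m + gaussianMaxIncrement m := by linarith
    refine le_trans ?_ this
    have hm0 : 0 < m := by linarith
    rw [Real.sqrt_le_left (by positivity)]
    have hsq : (m + 0.3 * N⁻¹ / m) ^ 2 = m ^ 2 + 0.6 * N⁻¹ + (0.3 * N⁻¹ / m) ^ 2 := by
      field_simp
      ring
    rw [hsq, hm2]
    nlinarith [sq_nonneg (0.3 * N⁻¹ / m)]

end GaussianMaximumGrowth

section NegativeType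

theorem card_Ico_inter_Ico_add (i j m : ℕ) :
    ((Finset.Ico i (i + m) ∩ Finset.Ico j (j + m)).card : ℝ) =
      m - min |(i : ℝ) - j| m := by
  rw [Finset.Ico_inter_Ico, Nat.card_Ico]
  wlog hij : i ≤ j generalizing i j
  · rw [sup_comm, inf_comm, abs_sub_comm]
    exact this j i (by omega)
  have hij' : (i : ℝ) ≤ j := by exact_mod_cast hij
  rw [sup_of_le_right hij, inf_of_le_left (by omega), abs_sub_comm, abs_of_nonneg (by linarith)]
  rcases le_total (j - i) m with h | h
  · have h' : (j : ℝ) - i ≤ m := by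
      rw [← Nat.cast_sub hij]
      exact_mod_cast h
    rw [min_eq_left h', Nat.cast_sub (by omega)]
    push_cast
    ring
  · have h' : (m : ℝ) ≤ (j : ℝ) - i := by
      rw [← Nat.cast_sub hij]
      exact_mod_cast h
    rw [min_eq_right h', Nat.sub_eq_zero_of_le (by omega)]
    simp

variable {n : ℕ} {c : Fin (n + 1) → ℝ}

theorem sum_sum_mul_const (hc : ∑ i, c i = 0) (a : ℝ) : ∑ i, ∑ j, c i * c j * a = 0 := by
  simp_rw [← Finset.sum_mul, ← Finset.mul_sum, hc]
  simp

theorem sum_sum_mul_min_abs_sub_nonpos (hc : ∑ i, c i = 0) (m : ℕ) :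
    ∑ i, ∑ j, c i * c j * min |((i : ℕ) : ℝ) - ((j : ℕ) : ℝ)| m ≤ 0 := by
  have hsub : ∀ i : Fin (n + 1), Finset.Ico (i : ℕ) (i + m) ⊆ Finset.range (n + 1 + m) := by
    intro i x hx
    have := i.2
    rw [Finset.mem_Ico] at hx
    rw [Finset.mem_range]
    omega
  have hcard : ∀ i j : Fin (n + 1), ((m : ℝ) - min |((i : ℕ) : ℝ) - ((j : ℕ) : ℝ)| m) =
      ∑ l ∈ Finset.range (n + 1 + m), (if l ∈ Finset.Ico (i : ℕ) (i + m) then (1 : ℝ) else 0) *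
        (if l ∈ Finset.Ico (j : ℕ) (j + m) then 1 else 0) := by
    intro i j
    rw [← card_Ico_inter_Ico_add]
    simp_rw [mul_ite, mul_one, mul_zero, ← ite_and, ← Finset.mem_inter]
    rw [Finset.sum_ite_mem, Finset.sum_const, nsmul_eq_mul, mul_one,
      Finset.inter_eq_right.2 ((Finset.inter_subset_left).trans (hsub j)),
      Finset.inter_comm]
  have hsq : ∑ i, ∑ j, c i * c j * ((m : ℝ) - min |((i : ℕ) : ℝ) - ((j : ℕ) : ℝ)| m) =
      ∑ l ∈ Finset.range (n + 1 + m),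
        (∑ i : Fin (n + 1), c i * if l ∈ Finset.Ico (i : ℕ) (i + m) then (1 : ℝ) else 0) ^ 2 := by
    simp_rw [hcard, sq, Finset.sum_mul_sum, Finset.mul_sum]
    rw [Finset.sum_comm]
    refine (Finset.sum_congr rfl fun i _ => Finset.sum_comm).trans ?_
    rw [Finset.sum_comm]
    refine Finset.sum_congr rfl fun l _ => ?_
    rw [Finset.sum_comm]
    exact Finset.sum_congr rfl fun i _ => Finset.sum_congr rfl fun j _ => by ring
  have h0 : 0 ≤ ∑ i, ∑ j, c i * c j * ((m : ℝ) - min |((i : ℕ) : ℝ) - ((j : ℕ) : ℝ)| m) := by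
    rw [hsq]
    positivity
  simp_rw [mul_sub, Finset.sum_sub_distrib] at h0
  rw [sum_sum_mul_const hc] at h0
  linarith

theorem cast_dist_eq_abs_sub (i j : ℕ) : (Nat.dist i j : ℝ) = |(i : ℝ) - j| := by
  rcases le_total i j with h | h
  · rw [Nat.dist_eq_sub_of_le h, Nat.cast_sub h, abs_sub_comm,
      abs_of_nonneg (sub_nonneg.2 (Nat.cast_le.2 h))]
  · rw [Nat.dist_eq_sub_of_le_right h, Nat.cast_sub h,
      abs_of_nonneg (sub_nonneg.2 (Nat.cast_le.2 h))]

/-- The kernel `G (min |i - j| k)` is conditionally negative semidefinite when `G` vanishes at the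
origin and is nondecreasing and concave on `{0, …, k}`. -/
theorem sum_sum_mul_dist_nonpos (hc : ∑ i, c i = 0) (k : ℕ) (G : ℕ → ℝ) (hG0 : G 0 = 0)
    (hmono : ∀ l < k, G l ≤ G (l + 1))
    (hconc : ∀ l, l + 1 < k → G (l + 2) - G (l + 1) ≤ G (l + 1) - G l) :
    ∑ i : Fin (n + 1), ∑ j : Fin (n + 1), c i * c j * G (min (Nat.dist i j) k) ≤ 0 := by
  induction k generalizing G with
  | zero => simp [hG0]
  | succ k ih =>
    set r := G (k + 1) - G k with hr
    have hr0 : 0 ≤ r := sub_nonneg.2 (hmono k k.lt_succ_self)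
    have hslope : ∀ l ≤ k, r ≤ G (l + 1) - G l := by
      intro l hl
      induction hl using Nat.decreasingInduction with
      | self => exact le_rfl
      | of_succ l hl ihl => exact ihl.trans (hconc l (by omega))
    have hih := ih (fun l => G l - r * l) (by simp [hG0])
      (fun l hl => by
        have := hslope l hl.le
        push_cast
        linarith)
      (fun l hl => by
        have := hconc l (by omega)
        push_cast
        linarith)
    have hG : ∀ d, G (min d k) - r * (min d k : ℕ) =
        G (min d (k + 1)) - r * min (d : ℝ) (k + 1 : ℕ) := by
      intro d
      rcases Nat.lt_or_ge k d with hd | hd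
      · rw [min_eq_right hd.le, min_eq_right (Nat.succ_le_of_lt hd),
          min_eq_right (Nat.cast_le.2 (Nat.succ_le_of_lt hd))]
        push_cast
        linarith
      · rw [min_eq_left hd, min_eq_left (by omega : d ≤ k + 1),
          min_eq_left (Nat.cast_le.2 (by omega : d ≤ k + 1))]
    have hmin := sum_sum_mul_min_abs_sub_nonpos hc (k + 1)
    simp_rw [hG, mul_sub, Finset.sum_sub_distrib, mul_left_comm _ r, ← Finset.mul_sum,
      cast_dist_eq_abs_sub] at hih
    nlinarith

/-- For `a ∈ (0, 1]` the kernel `|i - j| ^ a` on integers is conditionally negative definite, with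
spectral gap at least `2 - 2 ^ a`. -/
theorem sum_sum_mul_rpow_abs_sub_le {a : ℝ} (ha0 : 0 < a) (ha1 : a ≤ 1) (hc : ∑ i, c i = 0) :
    ∑ i : Fin (n + 1), ∑ j : Fin (n + 1), c i * c j * |((i : ℕ) : ℝ) - ((j : ℕ) : ℝ)| ^ a ≤
      -((2 - 2 ^ a) * ∑ i, c i ^ 2) := by
  let G : ℕ → ℝ := fun k => if k = 0 then 0 else (k : ℝ) ^ a - (2 - 2 ^ a)
  have h2 : (1 : ℝ) ≤ 2 ^ a := Real.one_le_rpow (by norm_num) ha0.le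
  have hG := sum_sum_mul_dist_nonpos hc n G (by simp [G])
    (fun l _ => by
      rcases l with _ | l
      · simp [G]
        linarith
      · simp only [G, Nat.add_eq_zero_iff, one_ne_zero, and_false, if_false]
        gcongr
        simp)
    (fun l _ => by
      rcases l with _ | l
      · simp [G]
        linarith
      · simp only [G, Nat.add_eq_zero_iff, one_ne_zero, OfNat.ofNat_ne_zero, and_false, if_false]
        have h := (Real.concaveOn_rpow ha0.le ha1).2
          (show (l : ℝ) + 1 ∈ Ici 0 from mem_Ici.2 (by positivity))
          (show (l : ℝ) + 3 ∈ Ici 0 from mem_Ici.2 (by positivity))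
          (show (0 : ℝ) ≤ 1 / 2 by norm_num) (show (0 : ℝ) ≤ 1 / 2 by norm_num) (by norm_num)
        simp only [smul_eq_mul] at h
        rw [show 1 / 2 * ((l : ℝ) + 1) + 1 / 2 * ((l : ℝ) + 3) = (l : ℝ) + 2 by ring] at h
        push_cast
        rw [show (l : ℝ) + 1 + 2 = l + 3 by ring, show (l : ℝ) + 1 + 1 = l + 2 by ring]
        linarith)
  have hGeq : ∀ i j : Fin (n + 1), G (min (Nat.dist i j) n) =
      |((i : ℕ) : ℝ) - ((j : ℕ) : ℝ)| ^ a - (2 - 2 ^ a) + if i = j then (2 - 2 ^ a) else 0 := by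
    intro i j
    have hle : Nat.dist i j ≤ n := by
      unfold Nat.dist
      omega
    rw [min_eq_left hle, ← cast_dist_eq_abs_sub]
    rcases eq_or_ne i j with rfl | hij
    · simp [G, Nat.dist_self, ha0.ne']
    · have : Nat.dist i j ≠ 0 := (Nat.dist_pos_of_ne (Fin.val_ne_of_ne hij)).ne'
      simp [G, this, hij]
  simp_rw [hGeq, mul_add, mul_sub (_ * _) _ (2 - (2 : ℝ) ^ a), Finset.sum_add_distrib,
    Finset.sum_sub_distrib, sum_sum_mul_const hc] at hG
  simp only [mul_ite, mul_zero, Finset.sum_ite_eq, Finset.mem_univ, if_true] at hG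
  have : ∑ i, c i * c i * (2 - 2 ^ a) = (2 - 2 ^ a) * ∑ i, c i ^ 2 := by
    rw [Finset.mul_sum]
    exact Finset.sum_congr rfl fun i _ => by ring
  linarith

end NegativeType

section DyadicSupremum

theorem bddAbove_range_Icc_of_continuousOn {x : ℝ → ℝ} (hx : ContinuousOn x (Icc 0 1)) :
    BddAbove (range fun t : Icc (0 : ℝ) 1 => x t) := by
  have := (isCompact_Icc.image_of_continuousOn hx).bddAbove
  rwa [image_eq_range] at this

theorem div_two_pow_mem_Icc {j i : ℕ} (hi : i ≤ 2 ^ j) : (i : ℝ) / 2 ^ j ∈ Icc (0 : ℝ) 1 := by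
  refine ⟨by positivity, (div_le_one (by positivity)).2 ?_⟩
  exact_mod_cast hi

/-- The maximum of a continuous path over `[0, 1]` is the limit of its dyadic maxima. -/
theorem tendsto_iSup_dyadic {x : ℝ → ℝ} (hx : ContinuousOn x (Icc 0 1)) :
    Tendsto (fun j : ℕ => ⨆ i : Fin (2 ^ j + 1), x ((i : ℕ) / 2 ^ j)) atTop
      (𝓝 (⨆ t : Icc (0 : ℝ) 1, x t)) := by
  obtain ⟨t, ht, hmax⟩ := isCompact_Icc.exists_isMaxOn (nonempty_Icc.2 zero_le_one) hx
  have hsup : ⨆ t : Icc (0 : ℝ) 1, x t = x t :=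
    le_antisymm (ciSup_le fun s => hmax s.2)
      (le_ciSup (bddAbove_range_Icc_of_continuousOn hx) ⟨t, ht⟩)
  have hpow : Tendsto (fun j : ℕ => (2 : ℝ) ^ j) atTop atTop :=
    tendsto_pow_atTop_atTop_of_one_lt one_lt_two
  have hfl : ∀ j : ℕ, ⌊t * 2 ^ j⌋₊ ≤ 2 ^ j := fun j => by
    refine Nat.floor_le_of_le ?_
    push_cast
    exact mul_le_of_le_one_left (by positivity) ht.2
  have hlim : Tendsto (fun j : ℕ => (⌊t * 2 ^ j⌋₊ : ℝ) / 2 ^ j) atTop (𝓝[Icc 0 1] t) :=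
    tendsto_nhdsWithin_iff.2 ⟨(tendsto_nat_floor_mul_div_atTop ht.1).comp hpow,
      Eventually.of_forall fun j => div_two_pow_mem_Icc (hfl j)⟩
  rw [hsup]
  refine tendsto_of_tendsto_of_tendsto_of_le_of_le ((hx t ht).tendsto.comp hlim)
    tendsto_const_nhds (fun j => ?_) fun j => ?_
  · exact le_ciSup (f := fun i : Fin (2 ^ j + 1) => x ((i : ℕ) / 2 ^ j)) (Finite.bddAbove_range _)
      ⟨⌊t * 2 ^ j⌋₊, Nat.lt_succ_of_le (hfl j)⟩
  · exact ciSup_le fun i => hmax (div_two_pow_mem_Icc (Nat.le_of_lt_succ i.2))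

theorem abs_sub_dyadic_le_sum {x : ℝ → ℝ} {D : ℕ → ℝ} (hD : ∀ j, 0 ≤ D j)
    (h : ∀ j i : ℕ, i < 2 ^ j → |x ((i + 1 : ℕ) / 2 ^ j) - x (i / 2 ^ j)| ≤ D j) (j i : ℕ)
    (hi : i ≤ 2 ^ j) : |x (i / 2 ^ j) - x 0| ≤ ∑ k ∈ Finset.range (j + 1), D k := by
  induction j generalizing i with
  | zero =>
    have hi' : i = 0 ∨ i = 1 := by
      simp only [pow_zero] at hi
      omega
    rcases hi' with rfl | rfl
    · simpa using hD 0
    · simpa using h 0 0 (by norm_num)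
  | succ j ih =>
    rw [Finset.sum_range_succ]
    have hhalf : ∀ l : ℕ, ((2 * l : ℕ) : ℝ) / 2 ^ (j + 1) = l / 2 ^ j := fun l => by
      push_cast
      rw [pow_succ]
      field_simp
    rw [pow_succ] at hi
    obtain ⟨l, rfl | rfl⟩ := i.even_or_odd'
    · rw [hhalf]
      have := ih l (by omega)
      linarith [hD (j + 1)]
    · have h1 := ih l (by omega)
      have h2 := h (j + 1) (2 * l) (by rw [pow_succ]; omega)
      rw [hhalf] at h2
      calc _ = |(x ((2 * l + 1 : ℕ) / 2 ^ (j + 1)) - x (l / 2 ^ j)) + (x (l / 2 ^ j) - x 0)| := by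
            congr 1
            ring
        _ ≤ _ := (abs_add_le _ _).trans (by linarith)

end DyadicSupremum

section Integrability

theorem le_add_pow_mul_inv_pow {x r : ℝ} (hr : 0 < r) (q : ℕ) :
    |x| ≤ r + x ^ (2 * (q + 1)) * (r ^ (2 * q + 1))⁻¹ := by
  have hx : x ^ (2 * (q + 1)) = |x| ^ (2 * q + 1) * |x| := by
    rw [← pow_succ, ← (even_two_mul (q + 1)).pow_abs]
    ring_nf
  rw [hx]
  rcases le_total |x| r with h | h
  · have : 0 ≤ |x| ^ (2 * q + 1) * |x| * (r ^ (2 * q + 1))⁻¹ := by positivity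
    linarith
  · have h1 : 1 ≤ |x| ^ (2 * q + 1) * (r ^ (2 * q + 1))⁻¹ := by
      rw [← div_eq_mul_inv, one_le_div (by positivity)]
      gcongr
    nlinarith [abs_nonneg x]

theorem integrable_of_tendsto_ae_of_integral_abs_le {Ω : Type*} [MeasurableSpace Ω] {μ : Measure Ω}
    {f : Ω → ℝ} {F : ℕ → Ω → ℝ} {C : ℝ} (hF : ∀ j, Integrable (F j) μ)
    (hC : ∀ j, ∫ ω, |F j ω| ∂μ ≤ C) (hlim : ∀ᵐ ω ∂μ, Tendsto (fun j => F j ω) atTop (𝓝 (f ω))) :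
    Integrable f μ := by
  refine ⟨aestronglyMeasurable_of_tendsto_ae _ (fun j => (hF j).aestronglyMeasurable) hlim, ?_⟩
  calc ∫⁻ ω, ‖f ω‖ₑ ∂μ = ∫⁻ ω, liminf (fun j => ‖F j ω‖ₑ) atTop ∂μ :=
        lintegral_congr_ae (by filter_upwards [hlim] with ω hω using hω.enorm.liminf_eq.symm)
    _ ≤ liminf (fun j => ∫⁻ ω, ‖F j ω‖ₑ ∂μ) atTop :=
        lintegral_liminf_le' fun j => (hF j).aemeasurable.enorm
    _ ≤ ENNReal.ofReal C := by
        refine liminf_le_of_frequently_le' (Frequently.of_forall fun j => ?_)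
        rw [← ofReal_integral_norm_eq_lintegral_enorm (hF j)]
        exact ENNReal.ofReal_le_ofReal (hC j)
    _ < ⊤ := ENNReal.ofReal_lt_top

theorem integral_pow_of_map_eq_gaussianReal {Ω : Type*} [MeasurableSpace Ω] {μ : Measure Ω}
    {Y : Ω → ℝ} {v : NNReal} (hY : Measurable Y) (h : μ.map Y = gaussianReal 0 v) (q : ℕ) :
    ∫ ω, Y ω ^ (2 * q) ∂μ = (∫ ω, Y ω ^ 2 ∂μ) ^ q * ∫ x, x ^ (2 * q) ∂(gaussianReal 0 1) := by
  have h1 : ∫ ω, Y ω ^ (2 * q) ∂μ = ∫ x, x ^ (2 * q) ∂(gaussianReal 0 v) := by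
    rw [← h, integral_map hY.aemeasurable (by fun_prop)]
  have h2 : gaussianReal 0 v = (gaussianReal 0 1).map (√v * ·) := by
    rw [gaussianReal_map_const_mul]
    congr 1
    · simp
    · ext
      simp
  rw [h1, integral_sq_of_map_eq_gaussianReal hY h, h2, integral_map (by fun_prop) (by fun_prop)]
  simp_rw [mul_pow, integral_const_mul, pow_mul, Real.sq_sqrt v.coe_nonneg]

theorem IsCenteredGaussianOn.isCenteredGaussianVector {Ω : Type} [MeasurableSpace Ω]
    {μ : Measure Ω} {X : ℝ → Ω → ℝ} {S : Set ℝ} (hX : IsCenteredGaussianOn μ X S) {k : ℕ}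
    {t : Fin k → ℝ} (ht : ∀ i, t i ∈ S) : IsCenteredGaussianVector μ fun i => X (t i) :=
  ⟨fun i => hX.1 _ (ht i), fun c => hX.2 k c t ht⟩

namespace IsFBM

variable {Ω : Type} [MeasurableSpace Ω] {μ : Measure Ω} {H : ℝ} {B : ℝ → Ω → ℝ}

/-- The variance of a linear combination of values of a fractional Brownian motion, when the
coefficients sum to zero. -/
theorem integral_sq_sum (hB : IsFBM μ H B) {k : ℕ} {t : Fin k → ℝ} (ht : ∀ i, 0 ≤ t i)
    {c : Fin k → ℝ} (hc : ∑ i, c i = 0) :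
    ∫ ω, (∑ i, c i * B (t i) ω) ^ 2 ∂μ =
      -(∑ i, ∑ j, c i * c j * |t i - t j| ^ (2 * H)) / 2 := by
  rw [(hB.1.isCenteredGaussianVector ht).integral_sq_sum]
  have h1 : ∀ i j, c i * c j * ∫ ω, B (t i) ω * B (t j) ω ∂μ =
      c i * t i ^ (2 * H) / 2 * c j + c i * (c j * t j ^ (2 * H) / 2) -
        c i * c j * |t i - t j| ^ (2 * H) / 2 := fun i j => by
    rw [hB.2.2.2 _ _ (ht i) (ht j), abs_sub_comm]
    ring
  simp_rw [h1, Finset.sum_sub_distrib, Finset.sum_add_distrib, ← Finset.mul_sum, ← Finset.sum_mul,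
    ← Finset.sum_div, hc]
  ring

theorem integral_sq_sub (hB : IsFBM μ H B) (hH : 0 < H) {s t : ℝ} (hs : 0 ≤ s) (ht : 0 ≤ t) :
    ∫ ω, (B s ω - B t ω) ^ 2 ∂μ = |s - t| ^ (2 * H) := by
  have h := hB.integral_sq_sum (t := ![s, t]) (c := ![1, -1])
    (fun i => by fin_cases i <;> simp [hs, ht]) (by simp)
  have h0 : (0 : ℝ) ^ (2 * H) = 0 := Real.zero_rpow (by positivity)
  simpa [Fin.sum_univ_two, h0, abs_sub_comm t s, ← sub_eq_add_neg] using h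

theorem exists_map_sub (hB : IsFBM μ H B) {s t : ℝ} (hs : 0 ≤ s) (ht : 0 ≤ t) :
    ∃ v : NNReal, μ.map (fun ω => B s ω - B t ω) = gaussianReal 0 v := by
  have h := hB.1.2 2 ![1, -1] ![s, t] (fun i => by fin_cases i <;> simp [hs, ht])
  simpa [Fin.sum_univ_two, ← sub_eq_add_neg] using h

theorem integrable (hB : IsFBM μ H B) {t : ℝ} (ht : 0 ≤ t) : Integrable (B t) μ :=
  (hB.1.isCenteredGaussianVector (t := fun _ : Fin 1 => t) fun _ => ht).integrable 0

theorem ae_continuousOn_Icc (hB : IsFBM μ H B) :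
    ∀ᵐ ω ∂μ, ContinuousOn (fun t => B t ω) (Icc 0 1) := by
  filter_upwards [hB.2.1] with ω hω using hω.mono fun _ ht => ht.1

/-- The maximum of a fractional Brownian motion over `[0, 1]` is integrable. -/
theorem integrable_iSup [IsProbabilityMeasure μ] (hB : IsFBM μ H B) (hH : 0 < H) :
    Integrable (fun ω => ⨆ t : Icc (0 : ℝ) 1, B t ω) μ := by
  obtain ⟨q, hq⟩ := exists_nat_gt (1 / H)
  have hqH : 1 ≤ H * (q + 1 : ℕ) := by
    rw [div_lt_iff₀ hH] at hq
    push_cast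
    nlinarith
  set r : ℝ := 2 ^ (-(H / 2)) with hr
  have hr0 : 0 < r := by positivity
  have hr1 : r < 1 := Real.rpow_lt_one_of_one_lt_of_neg one_lt_two (by linarith)
  set M := ∫ x, x ^ (2 * (q + 1)) ∂(gaussianReal 0 1) with hM
  have hM0 : 0 ≤ M := integral_nonneg fun x => (even_two_mul _).pow_nonneg x
  let Δ : ℕ → ℕ → Ω → ℝ := fun j i ω => B ((i + 1 : ℕ) / 2 ^ j) ω - B (i / 2 ^ j) ω
  let D : ℕ → Ω → ℝ := fun j ω =>
    r ^ j + ∑ i ∈ Finset.range (2 ^ j), Δ j i ω ^ (2 * (q + 1)) * ((r ^ j) ^ (2 * q + 1))⁻¹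
  have hpos : ∀ j i : ℕ, (0 : ℝ) ≤ i / 2 ^ j := fun j i => by positivity
  have hΔm : ∀ j i, Measurable (Δ j i) := fun j i =>
    (hB.1.1 _ (hpos j (i + 1))).sub (hB.1.1 _ (hpos j i))
  have hΔint : ∀ j i, Integrable (fun ω => Δ j i ω ^ (2 * (q + 1))) μ := fun j i => by
    obtain ⟨v, hv⟩ := hB.exists_map_sub (hpos j (i + 1)) (hpos j i)
    have := (memLp_of_map_eq_gaussianReal (hΔm j i) hv (2 * (q + 1) : ℕ)).integrable_norm_pow
      (by positivity)
    simpa [(even_two_mul (q + 1)).pow_abs] using this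
  have hΔ : ∀ j i, ∫ ω, Δ j i ω ^ (2 * (q + 1)) ∂μ =
      ((2 : ℝ) ^ (-(2 * H * (q + 1 : ℕ)))) ^ j * M := fun j i => by
    obtain ⟨v, hv⟩ := hB.exists_map_sub (hpos j (i + 1)) (hpos j i)
    rw [integral_pow_of_map_eq_gaussianReal (hΔm j i) hv,
      hB.integral_sq_sub hH (hpos j (i + 1)) (hpos j i), ← hM]
    congr 1
    have : ((i + 1 : ℕ) : ℝ) / 2 ^ j - i / 2 ^ j = 2 ^ (-(j : ℝ)) := by
      rw [Real.rpow_neg (by norm_num), Real.rpow_natCast]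
      push_cast
      field_simp
      ring
    rw [this, abs_of_pos (by positivity), ← Real.rpow_mul (by norm_num), ← Real.rpow_mul_natCast
      (by norm_num), ← Real.rpow_mul_natCast (by norm_num)]
    congr 1
    ring
  have hD0 : ∀ j ω, 0 ≤ D j ω := fun j ω => by
    refine add_nonneg (by positivity) (Finset.sum_nonneg fun i _ => mul_nonneg ?_ (by positivity))
    exact (even_two_mul _).pow_nonneg _
  have hDint : ∀ j, Integrable (D j) μ := fun j =>
    (integrable_const _).add (integrable_finsetSum _ fun i _ => (hΔint j i).mul_const _)
  have hDle : ∀ j, ∫ ω, D j ω ∂μ ≤ (1 + M) * r ^ j := fun j => by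
    have hw : 2 * (2 : ℝ) ^ (-(2 * H * (q + 1 : ℕ))) * (r ^ (2 * q + 1))⁻¹ ≤ r := by
      rw [← div_eq_mul_inv, div_le_iff₀ (by positivity), ← pow_succ', hr,
        ← Real.rpow_mul_natCast (by norm_num)]
      nth_rewrite 1 [← Real.rpow_one 2]
      rw [← Real.rpow_add (by norm_num)]
      refine Real.rpow_le_rpow_of_exponent_le one_le_two ?_
      push_cast at hqH ⊢
      linarith
    have hI : ∫ ω, D j ω ∂μ =
        r ^ j + M * (2 * (2 : ℝ) ^ (-(2 * H * (q + 1 : ℕ))) * (r ^ (2 * q + 1))⁻¹) ^ j := by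
      rw [integral_add (integrable_const _)
        (integrable_finsetSum _ fun i _ => (hΔint j i).mul_const _),
        integral_finsetSum _ fun i _ => (hΔint j i).mul_const _]
      simp_rw [integral_mul_const, hΔ]
      simp only [integral_const, probReal_univ, one_smul, Finset.sum_const, Finset.card_range,
        nsmul_eq_mul, Nat.cast_pow, Nat.cast_ofNat, mul_pow, inv_pow, ← pow_mul,
        mul_comm j (2 * q + 1)]
      ring
    rw [hI, add_mul, one_mul]
    gcongr
  have hΔD : ∀ ω, ∀ j i : ℕ, i < 2 ^ j →
      |B ((i + 1 : ℕ) / 2 ^ j) ω - B (i / 2 ^ j) ω| ≤ D j ω := fun ω j i hi => by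
    refine (le_add_pow_mul_inv_pow (pow_pos hr0 j) q).trans ?_
    simp only [D]
    gcongr
    exact Finset.single_le_sum (f := fun i => Δ j i ω ^ (2 * (q + 1)) * ((r ^ j) ^ (2 * q + 1))⁻¹)
      (fun i _ => mul_nonneg ((even_two_mul _).pow_nonneg _) (by positivity))
      (Finset.mem_range.2 hi)
  have hFint : ∀ j : ℕ, Integrable
      (fun ω => ⨆ i : Fin (2 ^ j + 1), B ((i : ℕ) / 2 ^ j) ω) μ := fun j =>
    integrable_iSup_of_finite fun i => hB.integrable (hpos j i)
  refine integrable_of_tendsto_ae_of_integral_abs_le (C := (1 + M) * (1 - r)⁻¹)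
    (F := fun j ω => ⨆ i : Fin (2 ^ j + 1), B ((i : ℕ) / 2 ^ j) ω)
    hFint (fun j => ?_) ?_
  · calc ∫ ω, |⨆ i : Fin (2 ^ j + 1), B ((i : ℕ) / 2 ^ j) ω| ∂μ
        ≤ ∫ ω, ∑ k ∈ Finset.range (j + 1), D k ω ∂μ := by
          refine integral_mono_ae (hFint j).abs (integrable_finsetSum _ fun k _ => hDint k) ?_
          filter_upwards [hB.2.2.1] with ω hω
          have hle : ∀ i : Fin (2 ^ j + 1), |B ((i : ℕ) / 2 ^ j) ω| ≤
              ∑ k ∈ Finset.range (j + 1), D k ω := fun i => by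
            have := abs_sub_dyadic_le_sum (x := fun t => B t ω) (fun j => hD0 j ω) (hΔD ω) j i
              (Nat.le_of_lt_succ i.2)
            simpa [hω] using this
          rw [abs_le]
          refine ⟨?_, ciSup_le fun i => (le_abs_self _).trans (hle i)⟩
          exact (neg_le_neg (hle 0)).trans ((neg_abs_le _).trans
            (le_ciSup (f := fun i : Fin (2 ^ j + 1) => B ((i : ℕ) / 2 ^ j) ω)
              (Finite.bddAbove_range _) 0))
      _ = ∑ k ∈ Finset.range (j + 1), ∫ ω, D k ω ∂μ := integral_finsetSum _ fun k _ => hDint k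
      _ ≤ ∑ k ∈ Finset.range (j + 1), (1 + M) * r ^ k := Finset.sum_le_sum fun k _ => hDle k
      _ ≤ (1 + M) * (1 - r)⁻¹ := by
          rw [← Finset.mul_sum, ← tsum_geometric_of_lt_one hr0.le hr1]
          gcongr
          exact (summable_geometric_of_lt_one hr0.le hr1).sum_le_tsum _ fun _ _ => by positivity
  · filter_upwards [hB.ae_continuousOn_Icc] with ω hω using tendsto_iSup_dyadic hω

theorem integral_iSup_le_expMax [IsProbabilityMeasure μ] (hB : IsFBM μ H B) (hH : 0 < H) {k : ℕ}
    {t : Fin (k + 1) → ℝ} (ht : ∀ i, t i ∈ Icc (0 : ℝ) 1) :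
    ∫ ω, (⨆ i, B (t i) ω) ∂μ ≤ expMax μ B := by
  refine integral_mono_ae (integrable_iSup_of_finite fun i => hB.integrable (ht i).1)
    (hB.integrable_iSup hH) ?_
  filter_upwards [hB.ae_continuousOn_Icc] with ω hω
  exact ciSup_le fun i => le_ciSup (bddAbove_range_Icc_of_continuousOn hω) ⟨t i, ht i⟩

end IsFBM

end Integrability

namespace IsFBM

variable {Ω : Type} [MeasurableSpace Ω] {μ : Measure Ω} [IsProbabilityMeasure μ] {H : ℝ}
  {B : ℝ → Ω → ℝ}

/-- The lower bound on the expected maximum obtained from the times `0`, `1 / 2` and `1`. -/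
theorem three_point_le_expMax (hB : IsFBM μ H B) (hH : 0 < H) :
    √(2 / π) / 4 * (2 * (1 / 2) ^ H + 1) ≤ expMax μ B := by
  have ht : ∀ i, ![(0 : ℝ), 1 / 2, 1] i ∈ Icc (0 : ℝ) 1 := fun i => by
    fin_cases i <;> constructor <;> norm_num
  refine le_trans (le_of_eq ?_) (hB.integral_iSup_le_expMax hH ht)
  rw [(hB.1.isCenteredGaussianVector fun i => (ht i).1).integral_iSup_fin_three]
  have hsqrt : ∀ x : ℝ, 0 ≤ x → √(x ^ (2 * H)) = x ^ H := fun x hx => by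
    rw [mul_comm, Real.rpow_mul hx, Real.rpow_two, Real.sqrt_sq (by positivity)]
  simp only [Matrix.cons_val]
  rw [hB.integral_sq_sub hH le_rfl (by norm_num), hB.integral_sq_sub hH (by norm_num) zero_le_one,
    hB.integral_sq_sub hH le_rfl zero_le_one, hsqrt _ (abs_nonneg _), hsqrt _ (abs_nonneg _),
    hsqrt _ (abs_nonneg _), show |(0 : ℝ) - 1 / 2| = 1 / 2 by norm_num [abs_of_pos],
    show |(1 / 2 : ℝ) - 1| = 1 / 2 by norm_num [abs_of_pos], show |(0 : ℝ) - 1| = 1 by norm_num,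
    Real.one_rpow]
  ring

theorem lt_expMax_of_le (hB : IsFBM μ H B) (hH : 1 / 7 ≤ H) (hH1 : H < 1) :
    1 / (5 * √H) < expMax μ B := by
  have hH0 : 0 < H := by linarith
  refine lt_of_lt_of_le ?_ (hB.three_point_le_expMax hH0)
  have hpow : 1 - 0.7 * H ≤ (1 / 2 : ℝ) ^ H := by
    rw [Real.rpow_def_of_pos (by norm_num), one_div, Real.log_inv]
    nlinarith [Real.add_one_le_exp (-Real.log 2 * H), Real.log_two_lt_d9]
  have hπ : 0.7978 ≤ √(2 / π) := by
    refine Real.le_sqrt_of_sq_le ?_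
    rw [le_div_iff₀ Real.pi_pos]
    nlinarith [Real.pi_lt_d6]
  set s := √H with hs
  have hsH : s ^ 2 = H := Real.sq_sqrt hH0.le
  have hs1 : s ≤ 1 := Real.sqrt_le_one.2 hH1.le
  have hs0 : 0.377 ≤ s := Real.le_sqrt_of_sq_le (by norm_num; linarith)
  rw [div_lt_iff₀ (by positivity)]
  have h1 : 0.7978 / 4 * (3 - 1.4 * s ^ 2) ≤ √(2 / π) / 4 * (2 * (1 / 2) ^ H + 1) := by
    rw [hsH]
    gcongr
    · linarith
    · linarith
  have h2 : 1 < 0.7978 / 4 * (3 - 1.4 * s ^ 2) * (5 * s) := by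
    nlinarith [mul_nonneg (mul_nonneg (sub_nonneg.2 hs0) (sub_nonneg.2 hs1)) (by linarith : 0 ≤ s),
      mul_nonneg (sub_nonneg.2 hs0) (sub_nonneg.2 hs1)]
  exact h2.trans_le (by gcongr)

/-- The lower bound on the expected maximum obtained by comparing the values on the grid
`{i / n}` with independent Gaussian variables. -/
theorem sqrt_mul_gaussianMax_le_expMax (hB : IsFBM μ H B) (hH : 0 < H) (hH1 : 2 * H ≤ 1) {n : ℕ}
    (hn : 0 < n) : √((2 - 2 ^ (2 * H)) / 2 / n ^ (2 * H)) * gaussianMax n ≤ expMax μ B := by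
  have hn' : (0 : ℝ) < n := Nat.cast_pos.2 hn
  have ht : ∀ i : Fin (n + 1), ((i : ℕ) : ℝ) / n ∈ Icc (0 : ℝ) 1 := fun i =>
    ⟨by positivity, (div_le_one hn').2 (Nat.cast_le.2 (Nat.le_of_lt_succ i.2))⟩
  have h2 : (2 : ℝ) ^ (2 * H) ≤ 2 := by
    simpa using Real.rpow_le_rpow_of_exponent_le one_le_two hH1
  refine le_trans (mul_gaussianMax_le (hB.1.isCenteredGaussianVector fun i => (ht i).1)
    (Real.sqrt_nonneg _) fun c hc => ?_) (hB.integral_iSup_le_expMax hH ht)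
  rw [hB.integral_sq_sum (fun i => (ht i).1) hc,
    Real.sq_sqrt (div_nonneg (by linarith) (by positivity))]
  have hpow : ∀ i j : Fin (n + 1), c i * c j * |((i : ℕ) : ℝ) / n - ((j : ℕ) : ℝ) / n| ^ (2 * H) =
      c i * c j * |((i : ℕ) : ℝ) - ((j : ℕ) : ℝ)| ^ (2 * H) / n ^ (2 * H) := fun i j => by
    rw [← sub_div, abs_div, abs_of_pos hn', Real.div_rpow (abs_nonneg _) hn'.le, mul_div_assoc]
  simp_rw [hpow, ← Finset.sum_div]
  have hQ := sum_sum_mul_rpow_abs_sub_le (by positivity) hH1 hc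
  have hnH : (0 : ℝ) < n ^ (2 * H) := by positivity
  calc _ = (2 - 2 ^ (2 * H)) * (∑ i, c i ^ 2) / n ^ (2 * H) / 2 := by ring
    _ ≤ _ := by
        rw [← neg_div]
        gcongr
        linarith

theorem lt_expMax_of_lt (hB : IsFBM μ H B) (hH : 0 < H) (hH7 : H < 1 / 7) :
    1 / (5 * √H) < expMax μ B := by
  set n := ⌊rexp (1 / (2 * H))⌋₊ with hn
  have hexp : (33 : ℝ) ≤ rexp (1 / (2 * H)) := by
    rw [← Real.log_le_iff_le_exp (by norm_num)]
    refine log_thirtyThree_lt.le.trans ?_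
    rw [le_div_iff₀ (by positivity)]
    linarith
  have hn32 : 33 ≤ n := Nat.le_floor (by exact_mod_cast hexp)
  have hn0 : 0 < n := by omega
  have hlog : 1 / (2 * H) ≤ Real.log (n + 1) := by
    rw [Real.le_log_iff_exp_le (by positivity)]
    exact (Nat.lt_floor_add_one _).le
  have hnH : (n : ℝ) ^ (2 * H) ≤ 2.7183 := by
    calc (n : ℝ) ^ (2 * H) ≤ rexp (1 / (2 * H)) ^ (2 * H) := by
          gcongr
          exact Nat.floor_le (Real.exp_pos _).le
      _ = rexp 1 := by
          rw [← Real.exp_mul]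
          congr 1
          field_simp
      _ ≤ 2.7183 := Real.exp_one_lt_d9.le.trans (by norm_num)
  have h2H : (2 : ℝ) ^ (2 * H) ≤ 1.22 := by
    calc (2 : ℝ) ^ (2 * H) ≤ 2 ^ (2 / 7 : ℝ) :=
          Real.rpow_le_rpow_of_exponent_le one_le_two (by linarith)
      _ ≤ 1.22 := by
          refine le_of_pow_le_pow_left₀ (n := 7) (by norm_num) (by norm_num) ?_
          rw [← Real.rpow_mul_natCast (by norm_num)]
          norm_num
  have hmain := (mul_le_mul_of_nonneg_left (sqrt_log_le_gaussianMax (by omega : 32 ≤ n))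
    (Real.sqrt_nonneg ((2 - 2 ^ (2 * H)) / 2 / n ^ (2 * H)))).trans
    (hB.sqrt_mul_gaussianMax_le_expMax hH (by linarith) hn0)
  refine lt_of_lt_of_le ?_ hmain
  rw [← Real.sqrt_mul (div_nonneg (by linarith) (by positivity)), Real.lt_sqrt (by positivity),
    div_pow, mul_pow, Real.sq_sqrt hH.le]
  calc 1 ^ 2 / (5 ^ 2 * H) < 0.78 / 2 / 2.7183 * (3 / 5 * (1 / (2 * H))) := by
        rw [div_lt_iff₀ (by positivity)]
        field_simp
        norm_num
    _ ≤ _ := by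
        have : (0 : ℝ) < n := Nat.cast_pos.2 hn0
        have : 0 ≤ (2 - (2 : ℝ) ^ (2 * H)) / 2 / n ^ (2 * H) :=
          div_nonneg (by linarith) (by positivity)
        gcongr
        · linarith
        · linarith

theorem lt_expMax (hB : IsFBM μ H B) (hH : H ∈ Ioo (0 : ℝ) 1) : 1 / (5 * √H) < expMax μ B := by
  rcases lt_or_ge H (1 / 7) with h | h
  · exact hB.lt_expMax_of_lt hH.1 h
  · exact hB.lt_expMax_of_le h hH.2

end IsFBM

theorem tendsto_one_div_mul_sqrt_nhdsGT_zero :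
    Tendsto (fun x : ℝ => 1 / (5 * √x)) (𝓝[>] 0) atTop := by
  simp_rw [one_div]
  refine tendsto_inv_nhdsGT_zero.comp (tendsto_nhdsWithin_iff.2 ⟨?_, ?_⟩)
  · have h : ContinuousAt (fun x : ℝ => 5 * √x) 0 := by fun_prop
    simpa [ContinuousAt] using h.tendsto.mono_left nhdsWithin_le_nhds
  · filter_upwards [self_mem_nhdsWithin] with x hx
    have : 0 < √x := Real.sqrt_pos.2 hx
    exact mem_Ioi.2 (by positivity)

/-- `f(H) > 1/(5√H)` for every `H ∈ (0,1)`; consequently `f(H) → ∞`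
as `H → 0⁺`. -/
theorem stmt14 {Ω : Type} [MeasurableSpace Ω] (μ : Measure Ω) [IsProbabilityMeasure μ]
    (B : ℝ → ℝ → Ω → ℝ) (hB : ∀ H ∈ Ioo (0:ℝ) 1, IsFBM μ H (B H)) :
    (∀ H ∈ Ioo (0:ℝ) 1, 1 / (5 * Real.sqrt H) < expMax μ (B H)) ∧
      Tendsto (fun H => expMax μ (B H)) (𝓝[>] (0:ℝ)) atTop := by
  have h : ∀ H ∈ Ioo (0 : ℝ) 1, 1 / (5 * √H) < expMax μ (B H) := fun H hH => (hB H hH).lt_expMax hH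
  refine ⟨h, tendsto_atTop_mono' _ ?_ tendsto_one_div_mul_sqrt_nhdsGT_zero⟩
  filter_upwards [Ioo_mem_nhdsGT zero_lt_one] with H hH using (h H hH).le
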